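/- Let X be a real Banach space, let E be a closed linear subspace of X that is reflexive (as a Banach space in its own right), and let F be a closed linear subspace of X that is simultaneously approximatively weakly compact. Assume E + F is closed. Then E + F is simultaneously approximatively weakly compact. -/

import Mathlib

/-!
In a minimizing sequence `e n + f n` of `E + F` the summand `f n` need not be minimizing for any
fixed set, because `e n` varies; convex combinations repair this. By the open mapping theorem
`e n` may be taken bounded, so by reflexivity the closed convex hulls of its tails have a common
point `e₀`, and some convex combinations `u j + v j` of the tails of `e n + f n` satisfy
`u j → e₀`. As `simSup A` is convex and Lipschitz, `e₀ + v j` is again minimizing, so `v j` is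
minimizing in `F` for `A - e₀` and has a weakly convergent subsequence. Hence the closed convex
hulls of the tails of `e n + f n` have a common point too, and the same holds for every
subsequence.

For a bounded sequence this property forces a weakly convergent subsequence: a diagonal argument
makes countably many functionals, which separate the points of the closed span, converge along a
subsequence. All further subsequences then share the same single common point `z`, and any
functional that failed to converge to its value at `z` would produce a different one.
-/

open Filter Topology Pointwise

variable {X : Type*} [NormedAddCommGroup X] [NormedSpace ℝ X]

/-- `simSup A y = sup_{a ∈ A} ‖a - y‖`. -/
noncomputable def simSup (A : Set X) (y : X) : ℝ := ⨆ a : A, ‖(a : X) - y‖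

/-- `simDist A C = inf_{y ∈ C} sup_{a ∈ A} ‖a - y‖`. -/
noncomputable def simDist (A C : Set X) : ℝ := ⨅ y : C, simSup A (y : X)

/-- The set of best simultaneous approximations `P_C(A)`. -/
def simBest (A C : Set X) : Set X := {y | y ∈ C ∧ simSup A y = simDist A C}

/-- The set `P_C(A, δ)`. -/
def simBestApprox (A C : Set X) (δ : ℝ) : Set X :=
  {y | y ∈ C ∧ simSup A y < simDist A C + δ}

/-- `C` is simultaneously proximinal. -/
def SimProximinal (C : Set X) : Prop :=
  ∀ A : Set X, A.Nonempty → Bornology.IsBounded A → (simBest A C).Nonempty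

/-- `y` is a minimizing sequence in `C` for `A`. -/
def IsMinimizing (A C : Set X) (y : ℕ → X) : Prop :=
  (∀ n, y n ∈ C) ∧ Tendsto (fun n => simSup A (y n)) atTop (𝓝 (simDist A C))

/-- Weak convergence of a sequence. -/
def WeakTendsto (y : ℕ → X) (c : X) : Prop :=
  ∀ f : X →L[ℝ] ℝ, Tendsto (fun n => f (y n)) atTop (𝓝 (f c))

/-- `C` is simultaneously approximatively compact. -/
def SimApproxCompact (C : Set X) : Prop :=
  ∀ A : Set X, A.Nonempty → Bornology.IsBounded A → ∀ y : ℕ → X, IsMinimizing A C y →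
    ∃ c ∈ C, ∃ φ : ℕ → ℕ, StrictMono φ ∧ Tendsto (y ∘ φ) atTop (𝓝 c)

/-- `C` is simultaneously approximatively weakly compact. -/
def SimApproxWeakCompact (C : Set X) : Prop :=
  ∀ A : Set X, A.Nonempty → Bornology.IsBounded A → ∀ y : ℕ → X, IsMinimizing A C y →
    ∃ c ∈ C, ∃ φ : ℕ → ℕ, StrictMono φ ∧ WeakTendsto (y ∘ φ) c

/-- `C` is simultaneously strongly proximinal. -/
def SimStronglyProximinal (C : Set X) : Prop :=
  SimProximinal C ∧ ∀ A : Set X, A.Nonempty → Bornology.IsBounded A → ∀ ε > (0 : ℝ),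
    ∃ δ > (0 : ℝ), simBestApprox A C δ ⊆ simBest A C + Metric.closedBall (0 : X) ε

/-- `C` is simultaneously weakly strongly proximinal. -/
def SimWeakStronglyProximinal (C : Set X) : Prop :=
  SimProximinal C ∧ ∀ A : Set X, A.Nonempty → Bornology.IsBounded A →
    ∀ V : Set X, V ∈ 𝓝 (0 : WeakSpace ℝ X) → ∃ δ > (0 : ℝ),
      simBestApprox A C δ ⊆ simBest A C + V

section TailHull

variable {V W : Type*} [AddCommGroup V] [Module ℝ V] [TopologicalSpace V]

/-- The points lying in the closed convex hull of every tail of the sequence `y`: the points that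
stay approximable by convex combinations of arbitrarily late terms. -/
def tailHull (y : ℕ → V) : Set V := ⋂ N, closedConvexHull ℝ (y '' Set.Ici N)

theorem tailHull_subset_of_eventually_mem {y : ℕ → V} {C : Set V} (hC : Convex ℝ C)
    (hCc : IsClosed C) (hy : ∀ᶠ n in atTop, y n ∈ C) : tailHull y ⊆ C := by
  obtain ⟨N, hN⟩ := eventually_atTop.1 hy
  exact (Set.iInter_subset _ N).trans
    (closedConvexHull_min (Set.image_subset_iff.2 hN) hC hCc)

theorem map_mem_tailHull [AddCommGroup W] [Module ℝ W] [TopologicalSpace W] (T : V →L[ℝ] W)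
    {y : ℕ → V} {z : V} (hz : z ∈ tailHull y) : T z ∈ tailHull (T ∘ y) :=
  Set.mem_iInter.2 fun N => tailHull_subset_of_eventually_mem
    (convex_closedConvexHull.linear_preimage T.toLinearMap)
    (isClosed_closedConvexHull.preimage T.continuous)
    ((eventually_ge_atTop N).mono fun _ hn => Set.mem_preimage.2 <|
      subset_closedConvexHull (Set.mem_image_of_mem (T ∘ y) hn)) hz

theorem eq_of_mem_tailHull_of_tendsto [NormedAddCommGroup W] [NormedSpace ℝ W] {y : ℕ → W} {z w : W}
    (hz : z ∈ tailHull y) (hy : Tendsto y atTop (𝓝 w)) : z = w :=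
  eq_of_forall_dist_le fun ε hε => tailHull_subset_of_eventually_mem
    (convex_closedBall w ε) Metric.isClosed_closedBall
    (hy.eventually_mem (Metric.closedBall_mem_nhds w hε)) hz

theorem exists_tendsto_map_of_mem_tailHull [AddCommGroup W] [Module ℝ W]
    (T : W →ₗ[ℝ] V) [IsTopologicalAddGroup V] [ContinuousConstSMul ℝ V] [FirstCountableTopology V]
    {q : ℕ → W} {z : V} (hz : z ∈ tailHull (T ∘ q)) :
    ∃ p : ℕ → W, (∀ j, p j ∈ convexHull ℝ (q '' Set.Ici j)) ∧ Tendsto (T ∘ p) atTop (𝓝 z) := by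
  obtain ⟨U, hU⟩ := (𝓝 z).exists_antitone_basis
  have hmeet : ∀ j, ∃ p ∈ convexHull ℝ (q '' Set.Ici j), T p ∈ U j := fun j => by
    have hzj := Set.mem_iInter.1 hz j
    rw [closedConvexHull_eq_closure_convexHull, Set.image_comp, ← LinearMap.image_convexHull]
      at hzj
    obtain ⟨_, hpU, p, hp, rfl⟩ := mem_closure_iff_nhds.1 hzj (U j) (hU.mem j)
    exact ⟨p, hp, hpU⟩
  choose p hp hpU using hmeet
  exact ⟨p, hp, hU.tendsto hpU⟩

end TailHull

section WeakConvergence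

theorem mem_of_mapClusterPt_toWeakSpace {ι : Type*} {l : Filter ι} {C : Set X}
    (hC : Convex ℝ C) (hCc : IsClosed C) {y : ι → X} {z : X} (hy : ∀ᶠ i in l, y i ∈ C)
    (hz : MapClusterPt (toWeakSpace ℝ X z) l (toWeakSpace ℝ X ∘ y)) : z ∈ C := by
  have hclosed : IsClosed (toWeakSpace ℝ X '' C) := by
    rw [← hCc.closure_eq, hC.toWeakSpace_closure ℝ]
    exact isClosed_closure
  exact (toWeakSpace ℝ X).injective.mem_set_image.1
    (hclosed.mem_of_mapClusterPt hz (hy.mono fun i hi => Set.mem_image_of_mem _ hi))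

theorem weakTendsto_iff_tendsto_toWeakSpace {y : ℕ → X} {c : X} :
    WeakTendsto y c ↔ Tendsto (toWeakSpace ℝ X ∘ y) atTop (𝓝 (toWeakSpace ℝ X c)) :=
  (WeakBilin.tendsto_iff_forall_eval_tendsto (topDualPairing ℝ X).flip fun _ _ h =>
    SeparatingDual.eq_iff_forall_dual_eq.2 (LinearMap.congr_fun h)).symm

namespace WeakTendsto

theorem of_tendsto {y : ℕ → X} {c : X} (h : Tendsto y atTop (𝓝 c)) : WeakTendsto y c :=
  fun f => (f.continuous.tendsto c).comp h

theorem add {y y' : ℕ → X} {c c' : X} (h : WeakTendsto y c) (h' : WeakTendsto y' c') :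
    WeakTendsto (y + y') (c + c') := fun f => by
  simpa only [Pi.add_apply, map_add] using (h f).add (h' f)

theorem mem_of_convex {C : Set X} (hC : Convex ℝ C) (hCc : IsClosed C) {y : ℕ → X} {c : X}
    (h : WeakTendsto y c) (hy : ∀ᶠ n in atTop, y n ∈ C) : c ∈ C :=
  mem_of_mapClusterPt_toWeakSpace hC hCc hy
    (weakTendsto_iff_tendsto_toWeakSpace.1 h).mapClusterPt

theorem mem_tailHull {y w : ℕ → X} (hw : ∀ j, w j ∈ convexHull ℝ (y '' Set.Ici j)) {φ : ℕ → ℕ}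
    (hφ : Tendsto φ atTop atTop) {z : X} (h : WeakTendsto (w ∘ φ) z) : z ∈ tailHull y :=
  Set.mem_iInter.2 fun N => h.mem_of_convex convex_closedConvexHull isClosed_closedConvexHull
    ((hφ.eventually_ge_atTop N).mono fun k hk => convexHull_subset_closedConvexHull
      (convexHull_mono (Set.image_mono (Set.Ici_subset_Ici.2 hk)) (hw (φ k))))

end WeakTendsto

theorem isCompact_closure_toWeakSpace_of_reflexive
    (hrefl : Function.Surjective (NormedSpace.inclusionInDoubleDual ℝ X)) {s : Set X}
    (hs : Bornology.IsBounded s) : IsCompact (closure (toWeakSpace ℝ X '' s)) := by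
  refine NormedSpace.isCompact_closure_of_isBounded ℝ X _ ?_ fun ξ _ => ?_
  · rwa [Set.preimage_image_eq _ (toWeakSpace ℝ X).injective]
  · exact hrefl ξ

theorem tailHull_nonempty_of_reflexive
    (hrefl : Function.Surjective (NormedSpace.inclusionInDoubleDual ℝ X)) {y : ℕ → X}
    (hy : Bornology.IsBounded (Set.range y)) : (tailHull y).Nonempty := by
  obtain ⟨z, -, hz⟩ := (isCompact_closure_toWeakSpace_of_reflexive hrefl hy).exists_mapClusterPt
    (f := atTop) (u := toWeakSpace ℝ X ∘ y) (tendsto_principal.2 (Eventually.of_forall fun n =>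
      subset_closure (Set.mem_image_of_mem _ (Set.mem_range_self n))))
  exact ⟨(toWeakSpace ℝ X).symm z, Set.mem_iInter.2 fun N =>
    mem_of_mapClusterPt_toWeakSpace convex_closedConvexHull isClosed_closedConvexHull
      ((eventually_ge_atTop N).mono fun n hn => subset_closedConvexHull ⟨n, hn, rfl⟩) hz⟩

theorem exists_countable_dual_separating {𝕜 V : Type*} [RCLike 𝕜] [NormedAddCommGroup V]
    [NormedSpace 𝕜 V] {s : Set V} (hs : TopologicalSpace.IsSeparable s) :
    ∃ G : Set (StrongDual 𝕜 V), G.Countable ∧ ∀ u ∈ s, (∀ g ∈ G, g u = 0) → u = 0 := by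
  obtain ⟨D, hD, hsD⟩ := hs
  choose g hg_norm hg using exists_dual_vector'' 𝕜 (E := V)
  refine ⟨g '' D, hD.image g, fun u hu hgu => ?_⟩
  have hsub : D ⊆ {v | ‖v‖ ≤ ‖v - u‖} := fun v hv => by
    calc ‖v‖ = ‖g v (v - u)‖ := by simp [hg, hgu (g v) ⟨v, hv, rfl⟩]
      _ ≤ ‖v - u‖ := (g v).le_of_opNorm_le_of_le (hg_norm v) le_rfl |>.trans_eq (one_mul _)
  have hclosed : IsClosed {v | ‖v‖ ≤ ‖v - u‖} := isClosed_le (by fun_prop) (by fun_prop)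
  simpa using closure_minimal hsub hclosed (hsD hu)

theorem exists_subseq_forall_tendsto {𝕜 V ι : Type*} [NontriviallyNormedField 𝕜] [ProperSpace 𝕜]
    [SeminormedAddCommGroup V] [NormedSpace 𝕜 V] [Countable ι] (g : ι → StrongDual 𝕜 V) {y : ℕ → V}
    (hy : Bornology.IsBounded (Set.range y)) :
    ∃ (L : ι → 𝕜) (φ : ℕ → ℕ), StrictMono φ ∧
      ∀ i, Tendsto (fun n => g i (y (φ n))) atTop (𝓝 (L i)) := by
  obtain ⟨L, -, φ, hφ, hL⟩ := (isCompact_univ_pi fun i =>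
      (hy.image (g i)).isCompact_closure).tendsto_subseq (x := fun n i => g i (y n))
    fun n i _ => subset_closure ⟨y n, ⟨n, rfl⟩, rfl⟩
  exact ⟨L, φ, hφ, tendsto_pi_nhds.1 hL⟩

theorem weakTendsto_of_forall_mem_tailHull_subseq {y : ℕ → X} {z : X}
    (hy : Bornology.IsBounded (Set.range y))
    (hz : ∀ ψ : ℕ → ℕ, StrictMono ψ → z ∈ tailHull (y ∘ ψ)) : WeakTendsto y z := by
  intro f
  refine (hy.image f).isCompact_closure.tendsto_nhds_of_unique_mapClusterPt
    (Eventually.of_forall fun n => subset_closure ⟨y n, ⟨n, rfl⟩, rfl⟩) fun r _ hr => ?_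
  obtain ⟨ψ, hψ, hlim⟩ := hr.tendsto_subseq
  exact (eq_of_mem_tailHull_of_tendsto (map_mem_tailHull f (hz ψ hψ)) hlim).symm

theorem exists_weakTendsto_subseq {y : ℕ → X} (hy : Bornology.IsBounded (Set.range y))
    (hne : ∀ φ : ℕ → ℕ, StrictMono φ → (tailHull (y ∘ φ)).Nonempty) :
    ∃ (z : X) (φ : ℕ → ℕ), StrictMono φ ∧ WeakTendsto (y ∘ φ) z := by
  let S := (Submodule.span ℝ (Set.range y)).topologicalClosure
  have hS : TopologicalSpace.IsSeparable (S : Set X) :=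
    ((Set.countable_range y).isSeparable.span (R := ℝ)).closure
  have hyS : ∀ ψ : ℕ → ℕ, tailHull (y ∘ ψ) ⊆ S := fun ψ =>
    tailHull_subset_of_eventually_mem S.convex (Submodule.isClosed_topologicalClosure _)
      (Eventually.of_forall fun n =>
        Submodule.le_topologicalClosure _ (Submodule.subset_span ⟨ψ n, rfl⟩))
  obtain ⟨G, hGc, hG⟩ := exists_countable_dual_separating (𝕜 := ℝ) hS
  have := hGc.to_subtype
  obtain ⟨L, φ, hφ, hL⟩ := exists_subseq_forall_tendsto ((↑) : G → StrongDual ℝ X) hy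
  have hGL : ∀ ψ : ℕ → ℕ, StrictMono ψ → ∀ w ∈ tailHull (y ∘ φ ∘ ψ), ∀ g : G, g.1 w = L g :=
    fun ψ hψ w hw g => eq_of_mem_tailHull_of_tendsto (map_mem_tailHull g.1 hw)
      ((hL g).comp hψ.tendsto_atTop)
  obtain ⟨z, hz⟩ := hne φ hφ
  refine ⟨z, φ, hφ, weakTendsto_of_forall_mem_tailHull_subseq
    (hy.subset (Set.range_comp_subset_range φ y)) fun ψ hψ => ?_⟩
  obtain ⟨w, hw⟩ := hne (φ ∘ ψ) (hφ.comp hψ)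
  have hwz : w - z = 0 := hG _ (S.sub_mem (hyS _ hw) (hyS _ hz)) fun g hg => by
    rw [map_sub, hGL ψ hψ w hw ⟨g, hg⟩, hGL id strictMono_id z hz ⟨g, hg⟩, sub_self]
  rwa [← sub_eq_zero.1 hwz]

end WeakConvergence

section SimSup

variable {Y : Type*} [NormedAddCommGroup Y] {A C : Set Y}

theorem norm_sub_le_simSup (hA : Bornology.IsBounded A) {a : Y} (ha : a ∈ A) (x : Y) :
    ‖a - x‖ ≤ simSup A x := by
  obtain ⟨r, hr⟩ := (hA.sub (Bornology.isBounded_singleton (x := x))).exists_norm_le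
  refine le_ciSup (f := fun a : A => ‖(a : Y) - x‖) ⟨r, ?_⟩ ⟨a, ha⟩
  rintro _ ⟨b, rfl⟩
  exact hr _ (Set.sub_mem_sub b.2 rfl)

theorem simSup_nonneg (A : Set Y) (x : Y) : 0 ≤ simSup A x :=
  Real.iSup_nonneg fun _ => norm_nonneg _

theorem simSup_le {x : Y} {r : ℝ} (hr : 0 ≤ r) (h : ∀ a ∈ A, ‖a - x‖ ≤ r) : simSup A x ≤ r :=
  Real.iSup_le (fun a => h a a.2) hr

theorem simDist_le_simSup (A : Set Y) {x : Y} (hx : x ∈ C) : simDist A C ≤ simSup A x :=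
  ciInf_le (f := fun x : C => simSup A x)
    ⟨0, Set.forall_mem_range.2 fun x => simSup_nonneg A x⟩ ⟨x, hx⟩

theorem lipschitzWith_simSup (hA : Bornology.IsBounded A) : LipschitzWith 1 (simSup A) :=
  .of_le_add fun x x' => simSup_le (add_nonneg (simSup_nonneg A x') dist_nonneg) fun a ha => by
    calc ‖a - x‖ ≤ ‖a - x'‖ + ‖x' - x‖ := norm_sub_le_norm_sub_add_norm_sub a x' x
      _ ≤ simSup A x' + dist x x' := by
        rw [dist_comm, dist_eq_norm]
        gcongr
        exact norm_sub_le_simSup hA ha x'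

theorem convexOn_simSup {A : Set X} (hA : Bornology.IsBounded A) :
    ConvexOn ℝ Set.univ (simSup A) := by
  refine ⟨convex_univ, fun x _ x' _ s t hs ht hst => simSup_le ?_ fun a ha => ?_⟩
  · exact add_nonneg (smul_nonneg hs (simSup_nonneg A x)) (smul_nonneg ht (simSup_nonneg A x'))
  · calc ‖a - (s • x + t • x')‖ = ‖s • (a - x) + t • (a - x')‖ := by
          rw [smul_sub, smul_sub, sub_add_sub_comm, ← add_smul, hst, one_smul]
      _ ≤ s * ‖a - x‖ + t * ‖a - x'‖ := by
          simpa only [norm_smul_of_nonneg, hs, ht] using norm_add_le (s • (a - x)) (t • (a - x'))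
      _ ≤ s * simSup A x + t * simSup A x' := by
          gcongr <;> exact norm_sub_le_simSup hA ha _

theorem simSup_neg_vadd (A : Set Y) (e x : Y) : simSup (-e +ᵥ A) x = simSup A (e + x) := by
  calc simSup (-e +ᵥ A) x = sSup ((‖· - x‖) '' (-e +ᵥ A)) :=
      (sSup_image' (f := (‖· - x‖))).symm
    _ = sSup ((‖· - (e + x)‖) '' A) := by
      simp only [← Set.image_vadd, Set.image_image, vadd_eq_add, neg_add_eq_sub, sub_sub]
    _ = simSup A (e + x) := sSup_image'

end SimSup

section IsMinimizing

variable {Y : Type*} [NormedAddCommGroup Y] {A C D : Set Y} {y : ℕ → Y}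

theorem isMinimizing_iff_eventually_lt : IsMinimizing A C y ↔
    (∀ n, y n ∈ C) ∧ ∀ r > simDist A C, ∀ᶠ n in atTop, simSup A (y n) < r :=
  and_congr_right fun hy => tendsto_order.trans <| and_iff_right fun _ hr =>
    Eventually.of_forall fun n => hr.trans_le (simDist_le_simSup A (hy n))

namespace IsMinimizing

theorem comp (h : IsMinimizing A C y) {φ : ℕ → ℕ} (hφ : Tendsto φ atTop atTop) :
    IsMinimizing A C (y ∘ φ) :=
  ⟨fun n => h.1 (φ n), h.2.comp hφ⟩

theorem isBounded_range (h : IsMinimizing A C y) (hne : A.Nonempty) (hA : Bornology.IsBounded A) :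
    Bornology.IsBounded (Set.range y) := by
  obtain ⟨a, ha⟩ := hne
  obtain ⟨r, hr⟩ := h.2.bddAbove_range
  refine (Metric.isBounded_closedBall (x := a) (r := r)).subset (Set.range_subset_iff.2 fun n => ?_)
  rw [Metric.mem_closedBall', dist_eq_norm]
  exact (norm_sub_le_simSup hA ha (y n)).trans (hr ⟨n, rfl⟩)

theorem neg_vadd {e : Y} (h : IsMinimizing A C (fun n => e + y n)) (hy : ∀ n, y n ∈ D)
    (hD : ∀ x ∈ D, e + x ∈ C) : IsMinimizing (-e +ᵥ A) D y := by
  have hdist : simDist A C ≤ simDist (-e +ᵥ A) D := by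
    have : Nonempty D := ⟨⟨y 0, hy 0⟩⟩
    refine le_ciInf fun x => ?_
    rw [simSup_neg_vadd]
    exact simDist_le_simSup A (hD x x.2)
  refine isMinimizing_iff_eventually_lt.2 ⟨hy, fun r hr => ?_⟩
  simpa only [simSup_neg_vadd] using (isMinimizing_iff_eventually_lt.1 h).2 r (hdist.trans_lt hr)

theorem of_mem_convexHull_of_tendsto_dist {A C : Set X} {y w x : ℕ → X}
    (h : IsMinimizing A C y) (hA : Bornology.IsBounded A)
    (hw : ∀ j, w j ∈ convexHull ℝ (y '' Set.Ici j)) (hx : ∀ j, x j ∈ C)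
    (hxw : Tendsto (fun j => dist (x j) (w j)) atTop (𝓝 0)) : IsMinimizing A C x := by
  refine isMinimizing_iff_eventually_lt.2 ⟨hx, fun r hr => ?_⟩
  obtain ⟨s, hds, hsr⟩ := exists_between hr
  have htail := eventually_forall_ge_atTop.2 ((isMinimizing_iff_eventually_lt.1 h).2 s hds)
  filter_upwards [htail, hxw.eventually_lt_const (sub_pos.2 hsr)] with j hj hdist
  have hws : simSup A (w j) < s := by
    have hsub : y '' Set.Ici j ⊆ {x ∈ Set.univ | simSup A x < s} :=
      Set.image_subset_iff.2 fun n hn => ⟨Set.mem_univ _, hj n hn⟩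
    exact (convexHull_min hsub ((convexOn_simSup hA).convex_lt s) (hw j)).2
  have hlip := (lipschitzWith_simSup hA).le_add_mul (x j) (w j)
  rw [NNReal.coe_one, one_mul] at hlip
  linarith

theorem tailHull_add_nonempty {A E F : Set X} {e f : ℕ → X} (h : IsMinimizing A (E + F) (e + f))
    (hne : A.Nonempty) (hA : Bornology.IsBounded A) (hF : Convex ℝ F)
    (hFawc : SimApproxWeakCompact F) (hf : ∀ n, f n ∈ F) {e₀ : X} (he₀E : e₀ ∈ E)
    (he₀ : e₀ ∈ tailHull e) : (tailHull (e + f)).Nonempty := by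
  obtain ⟨p, hp, hpe⟩ := exists_tendsto_map_of_mem_tailHull (LinearMap.fst ℝ X X)
    (q := fun n => (e n, f n)) he₀
  have hpF : ∀ j, (p j).2 ∈ F := fun j =>
    convexHull_min (by rintro _ ⟨n, -, rfl⟩; exact hf n)
      (hF.linear_preimage (LinearMap.snd ℝ X X)) (hp j)
  have hpadd : ∀ j, (p j).1 + (p j).2 ∈ convexHull ℝ ((e + f) '' Set.Ici j) := fun j =>
    convexHull_min (by rintro _ ⟨n, hn, rfl⟩; exact subset_convexHull ℝ _ ⟨n, hn, rfl⟩)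
      ((convex_convexHull ℝ _).linear_preimage (LinearMap.fst ℝ X X + LinearMap.snd ℝ X X)) (hp j)
  have hmin : IsMinimizing A (E + F) (fun j => e₀ + (p j).2) :=
    h.of_mem_convexHull_of_tendsto_dist hA hpadd (fun j => Set.add_mem_add he₀E (hpF j)) <| by
      simpa [dist_comm] using tendsto_iff_dist_tendsto_zero.1 hpe
  have hminF : IsMinimizing (-e₀ +ᵥ A) F (fun j => (p j).2) :=
    hmin.neg_vadd hpF fun x hx => Set.add_mem_add he₀E hx
  obtain ⟨c, -, φ, hφ, hc⟩ := hFawc _ (hne.vadd_set) (hA.vadd _) _ hminF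
  exact ⟨e₀ + c, WeakTendsto.mem_tailHull hpadd hφ.tendsto_atTop
    ((WeakTendsto.of_tendsto (hpe.comp hφ.tendsto_atTop)).add hc)⟩

end IsMinimizing

end IsMinimizing

theorem exists_isBounded_add_eq_of_mem_sup {𝕜 V ι : Type*} [NontriviallyNormedField 𝕜]
    [NormedAddCommGroup V] [NormedSpace 𝕜 V] {E F : Submodule 𝕜 V} [CompleteSpace E]
    [CompleteSpace F] [CompleteSpace ↥(E ⊔ F)] {y : ι → V} (hyEF : ∀ i, y i ∈ E ⊔ F)
    (hy : Bornology.IsBounded (Set.range y)) :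
    ∃ (e : ι → E) (f : ι → F), Bornology.IsBounded (Set.range e) ∧ ∀ i, (e i + f i : V) = y i := by
  let T : (E × F) →L[𝕜] ↥(E ⊔ F) := (E.subtypeL.coprod F.subtypeL).codRestrict (E ⊔ F) fun p =>
    Submodule.add_mem_sup p.1.2 p.2.2
  have hT : Function.Surjective T := by
    rintro ⟨x, hx⟩
    obtain ⟨e, he, f, hf, rfl⟩ := Submodule.mem_sup.1 hx
    exact ⟨(⟨e, he⟩, ⟨f, hf⟩), rfl⟩
  obtain ⟨K, hK, hlift⟩ := T.exists_preimage_norm_le hT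
  choose p hpy hpK using fun i => hlift ⟨y i, hyEF i⟩
  obtain ⟨R, hR⟩ := hy.exists_norm_le
  refine ⟨fun i => (p i).1, fun i => (p i).2, isBounded_iff_forall_norm_le.2 ⟨K * R, ?_⟩,
    fun i => congrArg Subtype.val (hpy i)⟩
  rintro _ ⟨i, rfl⟩
  calc ‖(p i).1‖ ≤ ‖p i‖ := norm_fst_le _
    _ ≤ K * ‖y i‖ := hpK i
    _ ≤ K * R := by gcongr; exact hR _ ⟨i, rfl⟩

/-- The sum of a closed reflexive subspace and a simultaneously approximatively weakly compact
closed subspace, when closed, is simultaneously approximatively weakly compact. -/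
theorem reflexive_add_simApproxWeakCompact_subspace [CompleteSpace X]
    (E F : Subspace ℝ X) (hE : IsClosed (E : Set X)) (hF : IsClosed (F : Set X))
    (hrefl : Function.Surjective (NormedSpace.inclusionInDoubleDual ℝ E))
    (hFawc : SimApproxWeakCompact (F : Set X))
    (hEF : IsClosed ((E : Set X) + (F : Set X))) :
    SimApproxWeakCompact ((E : Set X) + (F : Set X)) := by
  intro A hne hA y hy
  have := hE.completeSpace_coe
  have := hF.completeSpace_coe
  have : CompleteSpace ↥(E ⊔ F) := by
    rw [← Submodule.coe_sup] at hEF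
    exact hEF.completeSpace_coe
  have hyb := hy.isBounded_range hne hA
  obtain ⟨e, f, heb, hef⟩ := exists_isBounded_add_eq_of_mem_sup (E := E) (F := F)
    (fun n => Submodule.mem_sup.2 (hy.1 n)) hyb
  obtain rfl : (fun n => (e n : X)) + (fun n => (f n : X)) = y := funext hef
  have hne_tail : ∀ φ : ℕ → ℕ, StrictMono φ →
      (tailHull (((fun n => (e n : X)) + (fun n => (f n : X))) ∘ φ)).Nonempty := fun φ hφ => by
    obtain ⟨e₀, he₀⟩ := tailHull_nonempty_of_reflexive hrefl
      (heb.subset (Set.range_comp_subset_range φ e))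
    exact (hy.comp hφ.tendsto_atTop).tailHull_add_nonempty hne hA F.convex hFawc
      (fun n => (f (φ n)).2) e₀.2 (map_mem_tailHull E.subtypeL he₀)
  obtain ⟨c, φ, hφ, hc⟩ := exists_weakTendsto_subseq hyb hne_tail
  exact ⟨c, hc.mem_of_convex (E.convex.add F.convex) hEF (Eventually.of_forall fun k => hy.1 (φ k)),
    φ, hφ, hc⟩
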